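/- For every n ≥ 1, there is a bijection between the set of trees with n leaves in the class N (the least class with leaf ∈ N, x(u, α) ∈ N for u ∈ N and α a pure-x tree, and y(u, β) ∈ N for u ∈ N and β a pure-y tree) and the set of words in the two-letter alphabet {E, N} containing exactly n − 1 letters E and exactly n − 1 letters N; equivalently, with the set of lattice paths from (0,0) to (n−1, n−1) with unit east and north steps. -/

import Mathlib

/-- Planar binary trees with internal vertices labeled by one of two symbols `x`, `y`. -/
inductive LTree : Type
  | leaf : LTree
  | x : LTree → LTree → LTree
  | y : LTree → LTree → LTree

namespace LTree

/-- Number of leaves. -/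
def leaves : LTree → ℕ
  | leaf => 1
  | x u v => u.leaves + v.leaves
  | y u v => u.leaves + v.leaves

/-- Trees all of whose internal vertices are labeled `x`. -/
inductive PureX : LTree → Prop
  | leaf : PureX leaf
  | node {u v : LTree} : PureX u → PureX v → PureX (x u v)

/-- Trees all of whose internal vertices are labeled `y`. -/
inductive PureY : LTree → Prop
  | leaf : PureY leaf
  | node {u v : LTree} : PureY u → PureY v → PureY (y u v)

/-- The least class `N`: `leaf ∈ N`; `x(u, α) ∈ N` for `u ∈ N`, `α` pure-`x`;
`y(u, β) ∈ N` for `u ∈ N`, `β` pure-`y` (normal monomials of noncom-Bicom). -/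
inductive NormalBicom : LTree → Prop
  | leaf : NormalBicom leaf
  | xn {u α : LTree} : NormalBicom u → PureX α → NormalBicom (x u α)
  | yn {u β : LTree} : NormalBicom u → PureY β → NormalBicom (y u β)

end LTree

namespace LTree

/-- Node labeled by a Boolean: `true` is `x`, `false` is `y`. -/
def nd (b : Bool) (u v : LTree) : LTree := if b then x u v else y u v

/-- Pure trees of a given label. -/
def Pure (b : Bool) (t : LTree) : Prop := if b then PureX t else PureY t

/-- Dyck word of a pure tree, with up-step `b`. -/
def dyck (b : Bool) : LTree → List Bool
  | leaf => []
  | x u v => dyck b u ++ b :: dyck b v ++ [!b]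
  | y u v => dyck b u ++ b :: dyck b v ++ [!b]

/-- Word of a normal tree. -/
def enc : LTree → List Bool
  | leaf => []
  | x u v => enc u ++ true :: dyck true v ++ [false]
  | y u v => enc u ++ false :: dyck false v ++ [true]

theorem dyck_nd (b c : Bool) (u v : LTree) :
    dyck b (nd c u v) = dyck b u ++ b :: dyck b v ++ [!b] := by
  cases c <;> simp [nd, dyck]

theorem enc_nd (b : Bool) (u v : LTree) :
    enc (nd b u v) = enc u ++ b :: dyck b v ++ [!b] := by
  cases b <;> simp [nd, enc]

theorem pure_leaf (b : Bool) : Pure b leaf := by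
  cases b
  · exact PureY.leaf
  · exact PureX.leaf

theorem pure_nd {b : Bool} {u v : LTree} (hu : Pure b u) (hv : Pure b v) :
    Pure b (nd b u v) := by
  cases b
  · exact PureY.node hu hv
  · exact PureX.node hu hv

theorem normal_nd {b : Bool} {u v : LTree} (hu : NormalBicom u) (hv : Pure b v) :
    NormalBicom (nd b u v) := by
  cases b
  · exact NormalBicom.yn hu hv
  · exact NormalBicom.xn hu hv

theorem pure_induction {b : Bool} {P : LTree → Prop} (h0 : P leaf)
    (h1 : ∀ u v, P u → P v → P (nd b u v)) {t : LTree} (ht : Pure b t) : P t := by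
  cases b
  · have ht' : PureY t := ht
    induction ht' with
    | leaf => exact h0
    | node hu hv iu iv => exact h1 _ _ (iu hu) (iv hv)
  · have ht' : PureX t := ht
    induction ht' with
    | leaf => exact h0
    | node hu hv iu iv => exact h1 _ _ (iu hu) (iv hv)

theorem normal_induction {P : LTree → Prop} (h0 : P leaf)
    (h1 : ∀ b u v, P u → Pure b v → P (nd b u v)) {t : LTree} (ht : NormalBicom t) : P t := by
  induction ht with
  | leaf => exact h0
  | xn hu hv iu => exact h1 true _ _ iu hv
  | yn hu hv iu => exact h1 false _ _ iu hv

/-- One step of the stack decoder. -/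
def step : LTree × Bool × List LTree → Bool → LTree × Bool × List LTree
  | (t, _, []), c => (t, c, [leaf])
  | (t, b, [a]), c => if c = b then (t, b, [leaf, a]) else (nd b t a, b, [])
  | (t, b, a :: a' :: s), c =>
      if c = b then (t, b, leaf :: a :: a' :: s) else (t, b, nd b a' a :: s)

/-- The word read so far by a decoder in a given state. -/
def encState (t : LTree) (b : Bool) : List LTree → List Bool
  | [] => enc t
  | a :: s => encState t b s ++ b :: dyck b a

/-- Valid states. -/
def Valid (σ : LTree × Bool × List LTree) : Prop :=
  NormalBicom σ.1 ∧ ∀ a ∈ σ.2.2, Pure σ.2.1 a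

theorem step_spec (σ : LTree × Bool × List LTree) (c : Bool) (h : Valid σ) :
    Valid (step σ c) ∧ encState (step σ c).1 (step σ c).2.1 (step σ c).2.2 =
      encState σ.1 σ.2.1 σ.2.2 ++ [c] := by
  obtain ⟨t, b, s⟩ := σ
  obtain ⟨h1, h2⟩ := h
  match s with
  | [] => simp [step, Valid, encState, pure_leaf, dyck]; exact h1
  | [a] =>
    simp only [List.mem_singleton, forall_eq] at h2
    by_cases hc : c = b
    · subst hc
      simp [step, Valid, encState, pure_leaf, dyck]; exact ⟨h1, h2⟩
    · have hc' : c = !b := by cases b <;> cases c <;> simp_all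
      subst hc'
      simp [step, Valid, encState, enc_nd]; exact normal_nd h1 h2
  | a :: a' :: s =>
    simp only [List.mem_cons, forall_eq_or_imp] at h2
    obtain ⟨h2, h3, h4⟩ := h2
    by_cases hc : c = b
    · subst hc
      simp [step, Valid, encState, pure_leaf, dyck]; exact ⟨h1, h2, h3, h4⟩
    · have hc' : c = !b := by cases b <;> cases c <;> simp_all
      subst hc'
      simp [step, Valid, encState, dyck_nd]; exact ⟨h1, pure_nd h3 h2, h4⟩

theorem run_spec (w : List Bool) (σ : LTree × Bool × List LTree) (h : Valid σ) :
    ∃ τ, Valid τ ∧ encState τ.1 τ.2.1 τ.2.2 = encState σ.1 σ.2.1 σ.2.2 ++ w := by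
  induction w generalizing σ with
  | nil => exact ⟨σ, h, by simp⟩
  | cons c w ih =>
    obtain ⟨h1, h2⟩ := step_spec σ c h
    obtain ⟨τ, h3, h4⟩ := ih _ h1
    exact ⟨τ, h3, by rw [h4, h2]; simp⟩

theorem run_dyck {b : Bool} {a : LTree} (h : Pure b a) :
    ∀ t s, (dyck b a).foldl step (t, b, leaf :: s) = (t, b, a :: s) := by
  refine pure_induction (P := fun a => ∀ t s, (dyck b a).foldl step (t, b, leaf :: s) =
    (t, b, a :: s)) ?_ ?_ h
  · intro t s; rfl
  · intro u v hu hv t s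
    have e : step (t, b, u :: s) b = (t, b, leaf :: u :: s) := by
      cases s <;> simp [step]
    rw [dyck_nd]
    simp [List.foldl_append, hu, e, hv]
    simp [step]

theorem run_enc {t : LTree} (h : NormalBicom t) :
    ∃ b, (enc t).foldl step (leaf, true, []) = (t, b, []) := by
  refine normal_induction (P := fun t => ∃ b, (enc t).foldl step (leaf, true, []) = (t, b, []))
    ⟨true, rfl⟩ ?_ h
  rintro b u v ⟨b', hu⟩ hv
  refine ⟨b, ?_⟩
  rw [enc_nd]
  simp [List.foldl_append, hu, run_dyck hv, step]

theorem count_dyck (b c : Bool) (t : LTree) : (dyck b t).count c + 1 = t.leaves := by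
  induction t with
  | leaf => rfl
  | x u v hu hv => cases b <;> cases c <;> simp [dyck, leaves] at * <;> omega
  | y u v hu hv => cases b <;> cases c <;> simp [dyck, leaves] at * <;> omega

theorem count_enc (c : Bool) (t : LTree) : (enc t).count c + 1 = t.leaves := by
  induction t with
  | leaf => rfl
  | x u v hu hv =>
    have := count_dyck true c v
    cases c <;> simp [enc, leaves] at * <;> omega
  | y u v hu hv =>
    have := count_dyck false c v
    cases c <;> simp [enc, leaves] at * <;> omega

theorem count_encState (t : LTree) (b : Bool) (s : List LTree) :
    (encState t b s).count b = (encState t b s).count (!b) + s.length := by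
  induction s with
  | nil =>
    have h1 := count_enc b t
    have h2 := count_enc (!b) t
    simp only [encState, List.length_nil]; omega
  | cons a s ih =>
    have h1 := count_dyck b b a
    have h2 := count_dyck b (!b) a
    cases b <;> simp [encState] at * <;> omega

end LTree

open LTree in
/-- For every `n ≥ 1` there is a bijection between the trees with `n` leaves in the
class `N` of normal monomials of noncom-Bicom and the words in the alphabet `{E, N}`
(modeled as lists over `Bool`) containing exactly `n - 1` letters `E` and exactly
`n - 1` letters `N`, i.e. lattice paths from `(0,0)` to `(n-1, n-1)`. -/
theorem noncomBicom_bijection_with_lattice_paths :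
    ∀ n : ℕ, 1 ≤ n →
      Nonempty ({t : LTree // t.leaves = n ∧ NormalBicom t} ≃
                {w : List Bool // w.count true = n - 1 ∧ w.count false = n - 1}) := by
  intro n hn
  refine ⟨Equiv.ofBijective (fun t => ⟨enc t.1, ?_⟩) ⟨?_, ?_⟩⟩
  · have h1 := count_enc true t.1
    have h2 := count_enc false t.1
    have h3 := t.2.1
    omega
  · rintro ⟨t, ht⟩ ⟨u, hu⟩ h
    simp only [Subtype.mk.injEq] at h
    obtain ⟨b, h1⟩ := run_enc ht.2
    obtain ⟨c, h2⟩ := run_enc hu.2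
    rw [h, h2] at h1
    simp only [Prod.mk.injEq] at h1
    exact Subtype.ext h1.1.symm
  · rintro ⟨w, hw1, hw2⟩
    obtain ⟨⟨t, b, s⟩, ⟨h1, -⟩, h3⟩ :=
      run_spec w (leaf, true, []) ⟨NormalBicom.leaf, by simp⟩
    simp only [encState, enc, List.nil_append] at h3 h1
    have h4 := count_encState t b s
    rw [h3] at h4
    have hs : s = [] := by
      rw [← List.length_eq_zero_iff]
      cases b <;> simp only [Bool.not_true, Bool.not_false] at h4 <;> omega
    subst hs
    simp only [encState] at h3
    refine ⟨⟨t, ?_, h1⟩, Subtype.ext h3⟩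
    have h5 := count_enc true t
    rw [h3] at h5
    omega
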